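/- Let θ > 0 and let B be a standard Brownian motion. Then e^{-γT}·E[ sup_{s≤T} (θ²s/2 + θB_s) · e^{-θ²T/2 - θB_T} ] → 0 as T → ∞, for any γ > 0. -/

import Mathlib

open MeasureTheory ProbabilityTheory Filter

/-- A minimal axiomatization of a standard Brownian motion on `[0, ∞)`. -/
structure IsStandardBM {Ω : Type*} [MeasurableSpace Ω] (P : Measure Ω)
    (B : ℝ → Ω → ℝ) : Prop where
  meas : ∀ t, Measurable (B t)
  zero : ∀ᵐ ω ∂P, B 0 ω = 0
  gauss_incr : ∀ s t : ℝ, 0 ≤ s → s ≤ t →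
    Measure.map (fun ω => B t ω - B s ω) P = gaussianReal 0 ((t - s).toNNReal)
  indep_incr : ∀ s t u v : ℝ, 0 ≤ s → s ≤ t → t ≤ u → u ≤ v →
    IndepFun (fun ω => B t ω - B s ω) (fun ω => B v ω - B u ω) P
  cont : ∀ᵐ ω ∂P, Continuous fun t => B t ω

/-!
Girsanov's theorem is replaced by Hölder's inequality. Since `‖B t - B s‖_p = c_p * √(t - s)`,
dyadic chaining gives, for `p > 2`, that the `L^p` norm of `sup_{s ≤ T} |B s|` is at most
`C_p * √T`; this uses only the laws of the increments. For the conjugate exponent `q`, the `L^q`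
norm of the density `exp (-θ ^ 2 * T / 2 - θ * B T)` is `exp ((q - 1) * θ ^ 2 * T / 2)`. Hence the
expectation is at most `(θ ^ 2 * T / 2 + |θ| * C_p * √T) * exp ((q - 1) * θ ^ 2 * T / 2)`, and
choosing `q` so close to `1` that `(q - 1) * θ ^ 2 / 2 < γ` makes the factor `exp (-γ * T)` win.
-/

open scoped ENNReal NNReal Topology

section Lp

variable {α ι : Type*} {mα : MeasurableSpace α} {μ : Measure α} {p q c : ℝ≥0∞}

lemma lintegral_mul_le_eLpNorm_mul_eLpNorm [p.HolderConjugate q] (hp : p ≠ ∞) (hq : q ≠ ∞)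
    {f g : α → ℝ≥0∞} (hf : AEMeasurable f μ) (hg : AEMeasurable g μ) :
    ∫⁻ a, f a * g a ∂μ ≤ eLpNorm f p μ * eLpNorm g q μ := by
  have hpq := ENNReal.HolderConjugate.toReal_of_ne_top hp hq
  simpa only [eLpNorm_eq_lintegral_rpow_enorm_toReal (ENNReal.HolderConjugate.ne_zero p q) hp,
    eLpNorm_eq_lintegral_rpow_enorm_toReal (ENNReal.HolderConjugate.ne_zero q p) hq,
    enorm_eq_self, Pi.mul_apply] using ENNReal.lintegral_mul_le_Lp_mul_Lq μ hpq hf hg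

lemma eLpNorm_biSup_le {s : Finset ι} {f : ι → α → ℝ≥0∞} (hp₀ : p ≠ 0) (hp : p ≠ ∞)
    (hf : ∀ i ∈ s, AEMeasurable (f i) μ) (hfc : ∀ i ∈ s, eLpNorm (f i) p μ ≤ c) :
    eLpNorm (fun a ↦ ⨆ i ∈ s, f i a) p μ ≤ (s.card : ℝ≥0∞) ^ (1 / p.toReal) * c := by
  have hp_pos : 0 < p.toReal := ENNReal.toReal_pos hp₀ hp
  have sup_rpow_le (a : α) : (⨆ i ∈ s, f i a) ^ p.toReal ≤ ∑ i ∈ s, f i a ^ p.toReal := by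
    rw [← ENNReal.le_rpow_inv_iff hp_pos]
    refine iSup₂_le fun i hi ↦ (ENNReal.le_rpow_inv_iff hp_pos).2 ?_
    exact Finset.single_le_sum (f := fun i ↦ f i a ^ p.toReal) (fun _ _ ↦ zero_le) hi
  have lintegral_le {i : ι} (hi : i ∈ s) : ∫⁻ a, f i a ^ p.toReal ∂μ ≤ c ^ p.toReal := by
    have := hfc i hi
    rwa [eLpNorm_eq_lintegral_rpow_enorm_toReal hp₀ hp, one_div,
      ENNReal.rpow_inv_le_iff hp_pos] at this
  rw [eLpNorm_eq_lintegral_rpow_enorm_toReal hp₀ hp, one_div, ENNReal.rpow_inv_le_iff hp_pos,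
    ENNReal.mul_rpow_of_nonneg _ _ hp_pos.le, ENNReal.rpow_inv_rpow hp_pos.ne']
  calc ∫⁻ a, ‖⨆ i ∈ s, f i a‖ₑ ^ p.toReal ∂μ
      ≤ ∫⁻ a, ∑ i ∈ s, f i a ^ p.toReal ∂μ := lintegral_mono sup_rpow_le
    _ = ∑ i ∈ s, ∫⁻ a, f i a ^ p.toReal ∂μ :=
        lintegral_finsetSum' _ fun i hi ↦ (hf i hi).pow_const _
    _ ≤ s.card * c ^ p.toReal := by
        simpa only [nsmul_eq_mul] using Finset.sum_le_card_nsmul s _ _ fun i ↦ lintegral_le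

lemma eLpNorm_iSup_le_of_monotone {f : ℕ → α → ℝ≥0∞} (hp₀ : p ≠ 0) (hp : p ≠ ∞)
    (hf : ∀ n, AEMeasurable (f n) μ) (hmono : ∀ a, Monotone fun n ↦ f n a)
    (hfc : ∀ n, eLpNorm (f n) p μ ≤ c) :
    eLpNorm (fun a ↦ ⨆ n, f n a) p μ ≤ c := by
  have hp_pos : 0 < p.toReal := ENNReal.toReal_pos hp₀ hp
  simp only [eLpNorm_eq_lintegral_rpow_enorm_toReal hp₀ hp, one_div,
    ENNReal.rpow_inv_le_iff hp_pos, enorm_eq_self] at hfc ⊢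
  have iSup_rpow (a : α) : (⨆ n, f n a) ^ p.toReal = ⨆ n, f n a ^ p.toReal :=
    (ENNReal.orderIsoRpow p.toReal hp_pos).map_iSup _
  simp only [iSup_rpow]
  rw [lintegral_iSup' (fun n ↦ (hf n).pow_const _) (.of_forall fun a _ _ hmn ↦
    ENNReal.rpow_le_rpow (hmono a hmn) hp_pos.le)]
  exact iSup_le hfc

lemma eLpNorm_const_add_mul_le [IsProbabilityMeasure μ] (hp₁ : 1 ≤ p) {f : α → ℝ≥0∞}
    (hf : AEMeasurable f μ) (a b : ℝ≥0∞) :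
    eLpNorm (fun x ↦ a + b * f x) p μ ≤ a + b * eLpNorm f p μ := by
  have hp₀ : p ≠ 0 := (one_pos.trans_le hp₁).ne'
  refine (eLpNorm_add_le (by fun_prop) (hf.const_mul b).aestronglyMeasurable hp₁).trans
    (add_le_add ?_ ?_)
  · simp [eLpNorm_const a hp₀ (IsProbabilityMeasure.ne_zero μ)]
  · exact eLpNorm_le_mul_eLpNorm_of_ae_le_mul'' p hf.aestronglyMeasurable
      (.of_forall fun _ ↦ le_rfl)

end Lp

section Chaining

variable {Ω E : Type*} [PseudoEMetricSpace E] {f : ℝ → E} {T : ℝ} {n k : ℕ}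

/-- The `k`-th point of the dyadic subdivision of `[0, T]` of level `n`, for `k ≤ 2 ^ n`. -/
noncomputable def dyadicPoint (T : ℝ) (n k : ℕ) : ℝ := k * (T / 2 ^ n)

lemma dyadicPoint_zero_right (T : ℝ) (n : ℕ) : dyadicPoint T n 0 = 0 := by simp [dyadicPoint]

lemma dyadicPoint_succ_two_mul (T : ℝ) (n k : ℕ) :
    dyadicPoint T (n + 1) (2 * k) = dyadicPoint T n k := by
  simp only [dyadicPoint, pow_succ]
  push_cast
  field

lemma dyadicPoint_succ_sub (T : ℝ) (n k : ℕ) :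
    dyadicPoint T n (k + 1) - dyadicPoint T n k = T / 2 ^ n := by
  simp only [dyadicPoint]
  push_cast
  ring

lemma dyadicPoint_mem_Icc (hT : 0 ≤ T) (hk : k ≤ 2 ^ n) : dyadicPoint T n k ∈ Set.Icc 0 T := by
  refine ⟨by unfold dyadicPoint; positivity, ?_⟩
  calc (k : ℝ) * (T / 2 ^ n) ≤ (2 ^ n : ℕ) * (T / 2 ^ n) := by gcongr
    _ = T := by push_cast; field

lemma tendsto_dyadicPoint_floor {s : ℝ} (hT : 0 < T) (hs : 0 ≤ s) :
    Tendsto (fun n ↦ dyadicPoint T n ⌊s / T * 2 ^ n⌋₊) atTop (𝓝 s) := by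
  have := ((tendsto_nat_floor_mul_div_atTop (div_nonneg hs hT.le)).comp
    (tendsto_pow_atTop_atTop_of_one_lt (one_lt_two (α := ℝ)))).mul_const T
  rw [div_mul_cancel₀ _ hT.ne'] at this
  exact this.congr fun n ↦ by simp only [Function.comp_apply, dyadicPoint]; ring

/-- The largest distance from `f 0` to a value of `f` on the level-`n` dyadic subdivision
of `[0, T]`. -/
noncomputable def dyadicMax (f : ℝ → E) (T : ℝ) (n : ℕ) : ℝ≥0∞ :=
  ⨆ k ∈ Finset.range (2 ^ n + 1), edist (f 0) (f (dyadicPoint T n k))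

/-- The largest distance between the values of `f` at consecutive points of the level-`n` dyadic
subdivision of `[0, T]`. -/
noncomputable def dyadicStep (f : ℝ → E) (T : ℝ) (n : ℕ) : ℝ≥0∞ :=
  ⨆ k ∈ Finset.range (2 ^ n), edist (f (dyadicPoint T n k)) (f (dyadicPoint T n (k + 1)))

lemma edist_le_dyadicMax (hk : k ≤ 2 ^ n) :
    edist (f 0) (f (dyadicPoint T n k)) ≤ dyadicMax f T n :=
  le_iSup₂_of_le k (Finset.mem_range_succ_iff.2 hk) le_rfl

lemma edist_le_dyadicStep (hk : k < 2 ^ n) :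
    edist (f (dyadicPoint T n k)) (f (dyadicPoint T n (k + 1))) ≤ dyadicStep f T n :=
  le_iSup₂_of_le k (Finset.mem_range.2 hk) le_rfl

lemma dyadicMax_zero_le (f : ℝ → E) (T : ℝ) : dyadicMax f T 0 ≤ dyadicStep f T 0 := by
  refine iSup₂_le fun k hk ↦ ?_
  obtain rfl | rfl : k = 0 ∨ k = 1 := by
    have := Finset.mem_range.1 hk
    omega
  · simp [dyadicPoint_zero_right]
  · simpa only [dyadicPoint_zero_right] using edist_le_dyadicStep (f := f) (T := T) (k := 0)
      (n := 0) one_pos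

lemma dyadicMax_succ_le (f : ℝ → E) (T : ℝ) (n : ℕ) :
    dyadicMax f T (n + 1) ≤ dyadicMax f T n + dyadicStep f T (n + 1) := by
  refine iSup₂_le fun k hk ↦ ?_
  rw [Finset.mem_range, pow_succ] at hk
  obtain ⟨i, rfl | rfl⟩ := k.even_or_odd'
  · rw [dyadicPoint_succ_two_mul]
    exact (edist_le_dyadicMax (by omega)).trans le_self_add
  · refine (edist_triangle _ (f (dyadicPoint T (n + 1) (2 * i))) _).trans
      (add_le_add ?_ (edist_le_dyadicStep (by rw [pow_succ]; omega)))
    rw [dyadicPoint_succ_two_mul]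
    exact edist_le_dyadicMax (by omega)

lemma monotone_dyadicMax (f : ℝ → E) (T : ℝ) : Monotone (dyadicMax f T) := by
  refine monotone_nat_of_le_succ fun n ↦ iSup₂_le fun k hk ↦ ?_
  rw [← dyadicPoint_succ_two_mul]
  rw [Finset.mem_range] at hk
  exact edist_le_dyadicMax (by rw [pow_succ]; omega)

lemma edist_le_iSup_dyadicMax (hT : 0 < T) (hf : ContinuousOn f (Set.Icc 0 T)) {s : ℝ}
    (hs : s ∈ Set.Icc 0 T) : edist (f 0) (f s) ≤ ⨆ n, dyadicMax f T n := by
  have floor_le (n : ℕ) : ⌊s / T * 2 ^ n⌋₊ ≤ 2 ^ n := by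
    refine Nat.floor_le_of_le ?_
    push_cast
    exact mul_le_of_le_one_left (by positivity) ((div_le_one hT).2 hs.2)
  have tendsto_within : Tendsto (fun n ↦ dyadicPoint T n ⌊s / T * 2 ^ n⌋₊) atTop
      (𝓝[Set.Icc 0 T] s) :=
    tendsto_nhdsWithin_iff.2 ⟨tendsto_dyadicPoint_floor hT hs.1,
      .of_forall fun n ↦ dyadicPoint_mem_Icc hT.le (floor_le n)⟩
  refine le_of_tendsto' (tendsto_const_nhds.edist ((hf s hs).tendsto.comp tendsto_within))
    fun n ↦ ?_
  exact (edist_le_dyadicMax (floor_le n)).trans (le_iSup (dyadicMax f T) n)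

variable {mΩ : MeasurableSpace Ω} {P : Measure Ω} {X : ℝ → Ω → E} {p C : ℝ≥0∞} {β : ℝ}

lemma aemeasurable_dyadicMax (hT : 0 ≤ T)
    (hX : ∀ s ∈ Set.Icc 0 T, ∀ t ∈ Set.Icc 0 T, AEMeasurable (fun ω ↦ edist (X s ω) (X t ω)) P) :
    AEMeasurable (fun ω ↦ dyadicMax (X · ω) T n) P :=
  .biSup _ (Finset.countable_toSet _) fun _ hk ↦ hX _ ⟨le_rfl, hT⟩ _
    (dyadicPoint_mem_Icc hT (Finset.mem_range_succ_iff.1 hk))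

lemma aemeasurable_dyadicStep (hT : 0 ≤ T)
    (hX : ∀ s ∈ Set.Icc 0 T, ∀ t ∈ Set.Icc 0 T, AEMeasurable (fun ω ↦ edist (X s ω) (X t ω)) P) :
    AEMeasurable (fun ω ↦ dyadicStep (X · ω) T n) P :=
  .biSup _ (Finset.countable_toSet _) fun _ hk ↦
    hX _ (dyadicPoint_mem_Icc hT (Finset.mem_range.1 hk).le) _
      (dyadicPoint_mem_Icc hT (Finset.mem_range.1 hk))

lemma eLpNorm_dyadicStep_le (hp₀ : p ≠ 0) (hp : p ≠ ∞) (hβ : 0 ≤ β) (hT : 0 ≤ T)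
    (hX : ∀ s ∈ Set.Icc 0 T, ∀ t ∈ Set.Icc 0 T, AEMeasurable (fun ω ↦ edist (X s ω) (X t ω)) P)
    (hXC : ∀ s ∈ Set.Icc 0 T, ∀ t ∈ Set.Icc 0 T, s ≤ t →
      eLpNorm (fun ω ↦ edist (X s ω) (X t ω)) p P ≤ C * ENNReal.ofReal (t - s) ^ β) :
    eLpNorm (fun ω ↦ dyadicStep (X · ω) T n) p P ≤
      C * ENNReal.ofReal T ^ β * (2 ^ (1 / p.toReal - β)) ^ n := by
  have step_le : ∀ k ∈ Finset.range (2 ^ n),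
      eLpNorm (fun ω ↦ edist (X (dyadicPoint T n k) ω) (X (dyadicPoint T n (k + 1)) ω)) p P ≤
        C * ENNReal.ofReal (T / 2 ^ n) ^ β := fun k hk ↦ by
    have hk := Finset.mem_range.1 hk
    rw [← dyadicPoint_succ_sub T n k]
    refine hXC _ (dyadicPoint_mem_Icc hT hk.le) _ (dyadicPoint_mem_Icc hT hk) ?_
    rw [← sub_nonneg, dyadicPoint_succ_sub]
    positivity
  refine (eLpNorm_biSup_le hp₀ hp (fun k hk ↦ hX _
    (dyadicPoint_mem_Icc hT (Finset.mem_range.1 hk).le) _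
    (dyadicPoint_mem_Icc hT (Finset.mem_range.1 hk))) step_le).trans_eq ?_
  have rpow_two_pow (x : ℝ) : ((2 : ℝ≥0∞) ^ n) ^ x = (2 ^ x) ^ n := by
    rw [← ENNReal.rpow_natCast, ← ENNReal.rpow_natCast, ← ENNReal.rpow_mul, ← ENNReal.rpow_mul,
      mul_comm]
  have ofReal_div : ENNReal.ofReal (T / 2 ^ n) = ENNReal.ofReal T / 2 ^ n := by
    rw [ENNReal.ofReal_div_of_pos (by positivity), ENNReal.ofReal_pow zero_le_two,
      ENNReal.ofReal_ofNat]
  rw [Finset.card_range, Nat.cast_pow, Nat.cast_ofNat, ofReal_div,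
    ENNReal.div_rpow_of_nonneg _ _ hβ, rpow_two_pow, rpow_two_pow,
    ENNReal.rpow_sub _ _ two_ne_zero ENNReal.ofNat_ne_top, ENNReal.div_eq_inv_mul,
    ENNReal.div_eq_inv_mul, mul_pow, ENNReal.inv_pow]
  ring

-- The bound is informative exactly when `1 / p < β`; otherwise the last factor is `∞`.
theorem eLpNorm_iSup_dyadicMax_le (hp₁ : 1 ≤ p) (hp : p ≠ ∞) (hβ : 0 ≤ β) (hT : 0 ≤ T)
    (hX : ∀ s ∈ Set.Icc 0 T, ∀ t ∈ Set.Icc 0 T, AEMeasurable (fun ω ↦ edist (X s ω) (X t ω)) P)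
    (hXC : ∀ s ∈ Set.Icc 0 T, ∀ t ∈ Set.Icc 0 T, s ≤ t →
      eLpNorm (fun ω ↦ edist (X s ω) (X t ω)) p P ≤ C * ENNReal.ofReal (t - s) ^ β) :
    eLpNorm (fun ω ↦ ⨆ n, dyadicMax (X · ω) T n) p P ≤
      C * ENNReal.ofReal T ^ β * (1 - 2 ^ (1 / p.toReal - β))⁻¹ := by
  have hp₀ : p ≠ 0 := (one_pos.trans_le hp₁).ne'
  have sum_bound (n : ℕ) : eLpNorm (fun ω ↦ dyadicMax (X · ω) T n) p P ≤
      ∑ m ∈ Finset.range (n + 1), eLpNorm (fun ω ↦ dyadicStep (X · ω) T m) p P := by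
    induction n with
    | zero => simpa using eLpNorm_mono_enorm fun ω ↦ dyadicMax_zero_le (X · ω) T
    | succ n ih =>
      rw [Finset.sum_range_succ]
      exact (eLpNorm_mono_enorm fun ω ↦ dyadicMax_succ_le (X · ω) T n).trans <|
        (eLpNorm_add_le (aemeasurable_dyadicMax hT hX).aestronglyMeasurable
          (aemeasurable_dyadicStep hT hX).aestronglyMeasurable hp₁).trans <| by gcongr
  refine eLpNorm_iSup_le_of_monotone hp₀ hp (fun n ↦ aemeasurable_dyadicMax hT hX)
    (fun ω ↦ monotone_dyadicMax (X · ω) T) fun n ↦ (sum_bound n).trans ?_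
  calc ∑ m ∈ Finset.range (n + 1), eLpNorm (fun ω ↦ dyadicStep (X · ω) T m) p P
      ≤ ∑ m ∈ Finset.range (n + 1),
          C * ENNReal.ofReal T ^ β * (2 ^ (1 / p.toReal - β)) ^ m := by
        gcongr with m
        exact eLpNorm_dyadicStep_le hp₀ hp hβ hT hX hXC
    _ ≤ ∑' m, C * ENNReal.ofReal T ^ β * (2 ^ (1 / p.toReal - β)) ^ m := ENNReal.sum_le_tsum _
    _ = _ := by rw [ENNReal.tsum_mul_left, ENNReal.tsum_geometric]

end Chaining

section Gaussian

variable {Ω : Type*} {mΩ : MeasurableSpace Ω} {P : Measure Ω} {X : Ω → ℝ} {v : ℝ≥0}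

lemma eLpNorm_of_hasLaw_gaussianReal (hX : HasLaw X (gaussianReal 0 v) P) (p : ℝ≥0∞) :
    eLpNorm X p P = (v : ℝ≥0∞) ^ (1 / 2 : ℝ) * eLpNorm id p (gaussianReal 0 1) := by
  have map_sqrt_smul : (gaussianReal 0 1).map (√v • id) = gaussianReal 0 v := by
    change (gaussianReal 0 1).map (√v * ·) = _
    rw [gaussianReal_map_const_mul, mul_zero, mul_one]
    congr 1
    ext
    simp
  calc eLpNorm X p P = eLpNorm id p (gaussianReal 0 v) := by
        rw [← hX.map_eq, eLpNorm_map_measure (by fun_prop) hX.aemeasurable, Function.id_comp]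
    _ = eLpNorm (√v • id) p (gaussianReal 0 1) := by
        rw [← map_sqrt_smul, eLpNorm_map_measure (by fun_prop) (by fun_prop), Function.id_comp]
    _ = _ := by
        rw [eLpNorm_const_smul, Real.enorm_of_nonneg (Real.sqrt_nonneg _), Real.sqrt_eq_rpow,
          ← ENNReal.ofReal_rpow_of_nonneg v.coe_nonneg one_half_pos.le, ENNReal.ofReal_coe_nnreal]

lemma eLpNorm_exp_mul_of_hasLaw_gaussianReal (hX : HasLaw X (gaussianReal 0 v) P) (t : ℝ)
    {q : ℝ≥0∞} (hq₀ : q ≠ 0) (hq : q ≠ ∞) :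
    eLpNorm (fun ω ↦ Real.exp (t * X ω)) q P =
      ENNReal.ofReal (Real.exp (q.toReal * (v * t ^ 2 / 2))) := by
  have hq_pos : 0 < q.toReal := ENNReal.toReal_pos hq₀ hq
  have enorm_rpow (ω : Ω) : ‖Real.exp (t * X ω)‖ₑ ^ q.toReal =
      ENNReal.ofReal (Real.exp (q.toReal * t * X ω)) := by
    rw [Real.enorm_of_nonneg (Real.exp_nonneg _),
      ENNReal.ofReal_rpow_of_nonneg (Real.exp_nonneg _) hq_pos.le, ← Real.exp_mul]
    ring_nf
  have integrable_exp : Integrable (fun ω ↦ Real.exp (q.toReal * t * X ω)) P := by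
    have := hX.isProbabilityMeasure
    rw [← mgf_pos_iff, mgf_gaussianReal hX.map_eq]
    positivity
  rw [eLpNorm_eq_lintegral_rpow_enorm_toReal hq₀ hq]
  simp only [enorm_rpow]
  rw [← ofReal_integral_eq_lintegral_ofReal integrable_exp (.of_forall fun _ ↦ Real.exp_nonneg _),
    ← mgf, mgf_gaussianReal hX.map_eq, ENNReal.ofReal_rpow_of_nonneg (Real.exp_nonneg _)
    (by positivity), ← Real.exp_mul]
  congr 2
  field

lemma eLpNorm_exp_sub_mul_of_hasLaw_gaussianReal (hX : HasLaw X (gaussianReal 0 v) P) (θ : ℝ)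
    {q : ℝ≥0∞} (hq₀ : q ≠ 0) (hq : q ≠ ∞) :
    eLpNorm (fun ω ↦ Real.exp (-θ ^ 2 * v / 2 - θ * X ω)) q P =
      ENNReal.ofReal (Real.exp ((q.toReal - 1) * (θ ^ 2 * v / 2))) := by
  have exp_split : (fun ω ↦ Real.exp (-θ ^ 2 * v / 2 - θ * X ω)) =
      Real.exp (-θ ^ 2 * v / 2) • fun ω ↦ Real.exp (-θ * X ω) := by
    ext ω
    rw [Pi.smul_apply, smul_eq_mul, ← Real.exp_add, neg_mul θ, ← sub_eq_add_neg]
  rw [exp_split, eLpNorm_const_smul, eLpNorm_exp_mul_of_hasLaw_gaussianReal hX _ hq₀ hq,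
    Real.enorm_of_nonneg (Real.exp_nonneg _), ← ENNReal.ofReal_mul (Real.exp_nonneg _),
    ← Real.exp_add]
  ring_nf

end Gaussian

section BrownianIncrements

variable {Ω : Type*} {mΩ : MeasurableSpace Ω} {P : Measure Ω} {B : ℝ → Ω → ℝ} {p q : ℝ≥0∞}
  {s t T θ γ : ℝ}

/-- A process on `[0, ∞)` started at `0`, with continuous paths, whose increments have the same
laws as those of a standard Brownian motion. No independence of the increments is required, and
nothing is said about negative times. -/
structure HasBrownianIncrements (B : ℝ → Ω → ℝ) (P : Measure Ω) : Prop where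
  zero : ∀ᵐ ω ∂P, B 0 ω = 0
  hasLaw_sub : ∀ s t : ℝ, 0 ≤ s → s ≤ t →
    HasLaw (fun ω ↦ B t ω - B s ω) (gaussianReal 0 (t - s).toNNReal) P
  continuousOn : ∀ᵐ ω ∂P, ContinuousOn (B · ω) (Set.Ici 0)

lemma IsStandardBM.hasBrownianIncrements (hB : IsStandardBM P B) : HasBrownianIncrements B P where
  zero := hB.zero
  hasLaw_sub s t hs hst := ⟨((hB.meas t).sub (hB.meas s)).aemeasurable, hB.gauss_incr s t hs hst⟩
  continuousOn := hB.cont.mono fun _ h ↦ h.continuousOn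

namespace HasBrownianIncrements

lemma hasLaw (hB : HasBrownianIncrements B P) (ht : 0 ≤ t) :
    HasLaw (B t) (gaussianReal 0 t.toNNReal) P := by
  have := hB.hasLaw_sub 0 t le_rfl ht
  rw [sub_zero] at this
  refine this.congr ?_
  filter_upwards [hB.zero] with ω hω
  rw [hω, sub_zero]

lemma isProbabilityMeasure (hB : HasBrownianIncrements B P) : IsProbabilityMeasure P :=
  (hB.hasLaw le_rfl).isProbabilityMeasure

lemma aemeasurable_edist (hB : HasBrownianIncrements B P) (hs : 0 ≤ s) (ht : 0 ≤ t) :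
    AEMeasurable (fun ω ↦ edist (B s ω) (B t ω)) P :=
  (hB.hasLaw hs).aemeasurable.edist (hB.hasLaw ht).aemeasurable

lemma eLpNorm_edist (hB : HasBrownianIncrements B P) (hs : 0 ≤ s) (hst : s ≤ t) (p : ℝ≥0∞) :
    eLpNorm (fun ω ↦ edist (B s ω) (B t ω)) p P =
      eLpNorm id p (gaussianReal 0 1) * ENNReal.ofReal (t - s) ^ (1 / 2 : ℝ) := by
  rw [mul_comm, ENNReal.ofReal, ← eLpNorm_of_hasLaw_gaussianReal (hB.hasLaw_sub s t hs hst)]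
  refine eLpNorm_congr_enorm_ae (.of_forall fun ω ↦ ?_)
  rw [enorm_eq_self, edist_comm, edist_eq_enorm_sub]

end HasBrownianIncrements

/-- The constant produced by dyadic chaining in the `L^p` maximal inequality for Brownian motion:
the `L^p` norm of a standard Gaussian times the sum of the geometric series of ratio
`2 ^ (1 / p - 1 / 2)`. -/
noncomputable def chainingConst (p : ℝ≥0∞) : ℝ≥0∞ :=
  eLpNorm id p (gaussianReal 0 1) * (1 - 2 ^ (1 / p.toReal - 1 / 2))⁻¹

lemma chainingConst_ne_top (hp₂ : 2 < p) (hp : p ≠ ∞) : chainingConst p ≠ ∞ := by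
  refine ENNReal.mul_ne_top (memLp_id_gaussianReal' p hp).eLpNorm_ne_top ?_
  have exponent_neg : 1 / p.toReal - 1 / 2 < 0 := by
    have : 2 < p.toReal := by simpa using (ENNReal.toReal_lt_toReal ENNReal.ofNat_ne_top hp).2 hp₂
    exact sub_neg.2 (one_div_lt_one_div_of_lt two_pos this)
  rw [ENNReal.inv_ne_top, ne_eq, tsub_eq_zero_iff_le, not_le]
  exact ENNReal.rpow_lt_one_of_one_lt_of_neg ENNReal.one_lt_two exponent_neg

theorem HasBrownianIncrements.eLpNorm_iSup_dyadicMax_le (hB : HasBrownianIncrements B P)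
    (hp₁ : 1 ≤ p) (hp : p ≠ ∞) (hT : 0 ≤ T) :
    eLpNorm (fun ω ↦ ⨆ n, dyadicMax (B · ω) T n) p P ≤
      chainingConst p * ENNReal.ofReal T ^ (1 / 2 : ℝ) := by
  rw [chainingConst, mul_right_comm]
  exact _root_.eLpNorm_iSup_dyadicMax_le hp₁ hp one_half_pos.le hT
    (fun s hs t ht ↦ hB.aemeasurable_edist hs.1 ht.1)
    (fun s hs t _ hst ↦ (hB.eLpNorm_edist hs.1 hst p).le)

lemma enorm_sSup_image_le {f : ℝ → ℝ} (hT : 0 < T) (hf : ContinuousOn f (Set.Icc 0 T))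
    (hf₀ : f 0 = 0) (θ : ℝ) :
    ‖sSup ((fun s ↦ θ ^ 2 * s / 2 + θ * f s) '' Set.Icc 0 T)‖ₑ ≤
      ENNReal.ofReal (θ ^ 2 * T / 2) + ‖θ‖ₑ * ⨆ n, dyadicMax f T n := by
  obtain ⟨s, hs, hsup, -⟩ := isCompact_Icc.exists_sSup_image_eq_and_ge
    (Set.nonempty_Icc.2 hT.le) (f := fun s ↦ θ ^ 2 * s / 2 + θ * f s) (by fun_prop)
  have drift_le : ‖θ ^ 2 * s / 2‖ₑ ≤ ENNReal.ofReal (θ ^ 2 * T / 2) := by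
    have := hs.1
    rw [Real.enorm_of_nonneg (by positivity)]
    gcongr
    exact hs.2
  have path_le : ‖f s‖ₑ ≤ ⨆ n, dyadicMax f T n := by
    simpa only [hf₀, edist_comm, edist_zero_right] using edist_le_iSup_dyadicMax hT hf hs
  rw [hsup]
  refine (enorm_add_le _ _).trans (add_le_add drift_le ?_)
  rw [enorm_mul]
  gcongr

theorem HasBrownianIncrements.enorm_integral_sSup_mul_exp_le [p.HolderConjugate q]
    (hB : HasBrownianIncrements B P) (hp : p ≠ ∞) (hq : q ≠ ∞) (hT : 0 < T) (θ : ℝ) :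
    ‖∫ ω, sSup ((fun s ↦ θ ^ 2 * s / 2 + θ * B s ω) '' Set.Icc 0 T) *
      Real.exp (-θ ^ 2 * T / 2 - θ * B T ω) ∂P‖ₑ ≤
      (ENNReal.ofReal (θ ^ 2 * T / 2) +
        ‖θ‖ₑ * (chainingConst p * ENNReal.ofReal T ^ (1 / 2 : ℝ))) *
        ENNReal.ofReal (Real.exp ((q.toReal - 1) * (θ ^ 2 * T / 2))) := by
  have := hB.isProbabilityMeasure
  have hp₁ : 1 ≤ p := ENNReal.HolderConjugate.one_le p q
  set W : Ω → ℝ := fun ω ↦ Real.exp (-θ ^ 2 * T / 2 - θ * B T ω)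
  set drift := ENNReal.ofReal (θ ^ 2 * T / 2)
  set M : Ω → ℝ≥0∞ := fun ω ↦ ⨆ n, dyadicMax (B · ω) T n
  have aemeasurable_M : AEMeasurable M P := .iSup fun _ ↦
    aemeasurable_dyadicMax hT.le fun _ hs _ ht ↦ hB.aemeasurable_edist hs.1 ht.1
  have aemeasurable_W : AEMeasurable W P := by
    have := (hB.hasLaw hT.le).aemeasurable
    fun_prop
  have eLpNorm_W : eLpNorm W q P = ENNReal.ofReal (Real.exp ((q.toReal - 1) *
      (θ ^ 2 * T / 2))) := by
    simpa only [Real.coe_toNNReal T hT.le] using eLpNorm_exp_sub_mul_of_hasLaw_gaussianReal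
      (hB.hasLaw hT.le) θ (ENNReal.HolderConjugate.ne_zero q p) hq
  calc _ ≤ ∫⁻ ω, (drift + ‖θ‖ₑ * M ω) * ‖W ω‖ₑ ∂P := by
        refine (enorm_integral_le_lintegral_enorm _).trans (lintegral_mono_ae ?_)
        filter_upwards [hB.zero, hB.continuousOn] with ω hω₀ hω
        rw [enorm_mul]
        gcongr
        exact enorm_sSup_image_le hT (hω.mono Set.Icc_subset_Ici_self) hω₀ θ
    _ ≤ eLpNorm (fun ω ↦ drift + ‖θ‖ₑ * M ω) p P * eLpNorm (‖W ·‖ₑ) q P :=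
        lintegral_mul_le_eLpNorm_mul_eLpNorm hp hq (by fun_prop) (by fun_prop)
    _ ≤ _ := by
        rw [eLpNorm_enorm, eLpNorm_W]
        grw [eLpNorm_const_add_mul_le hp₁ aemeasurable_M, hB.eLpNorm_iSup_dyadicMax_le hp₁ hp hT.le]

lemma exists_holderConjugate_toReal_sub_one_lt {ε : ℝ} (hε : 0 < ε) :
    ∃ p q : ℝ≥0∞, p.HolderConjugate q ∧ 2 < p ∧ p ≠ ∞ ∧ q ≠ ∞ ∧ q.toReal - 1 < ε := by
  have hpq : (2 + 1 / ε).HolderConjugate (1 + ε / (1 + ε)) := by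
    rw [Real.holderConjugate_iff]
    refine ⟨by linarith [one_div_pos.2 hε], ?_⟩
    field
  refine ⟨_, _, hpq.ennrealOfReal, ?_, ENNReal.ofReal_ne_top, ENNReal.ofReal_ne_top, ?_⟩
  · rw [← ENNReal.ofReal_ofNat, ENNReal.ofReal_lt_ofReal_iff (by positivity)]
    exact lt_add_of_pos_right _ (one_div_pos.2 hε)
  · rw [ENNReal.toReal_ofReal (by positivity), add_sub_cancel_left]
    exact div_lt_self hε (by linarith)

theorem HasBrownianIncrements.exists_abs_integral_sSup_mul_exp_le
    (hB : HasBrownianIncrements B P) (θ : ℝ) {ε : ℝ} (hε : 0 < ε) :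
    ∃ C : ℝ, ∀ T > 0, |∫ ω, sSup ((fun s ↦ θ ^ 2 * s / 2 + θ * B s ω) '' Set.Icc 0 T) *
      Real.exp (-θ ^ 2 * T / 2 - θ * B T ω) ∂P| ≤
        (θ ^ 2 / 2 * T + C * √T) * Real.exp (ε * (θ ^ 2 / 2) * T) := by
  obtain ⟨p, q, hpq, hp₂, hp, hq, hqε⟩ := exists_holderConjugate_toReal_sub_one_lt hε
  refine ⟨|θ| * (chainingConst p).toReal, fun T hT ↦ ?_⟩
  rw [← ENNReal.ofReal_le_ofReal_iff (by positivity), ← Real.enorm_eq_ofReal_abs]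
  calc _ ≤ (ENNReal.ofReal (θ ^ 2 * T / 2) +
        ‖θ‖ₑ * (chainingConst p * ENNReal.ofReal T ^ (1 / 2 : ℝ))) *
        ENNReal.ofReal (Real.exp ((q.toReal - 1) * (θ ^ 2 * T / 2))) :=
        hB.enorm_integral_sSup_mul_exp_le hp hq hT θ
    _ ≤ (ENNReal.ofReal (θ ^ 2 * T / 2) +
        ‖θ‖ₑ * (chainingConst p * ENNReal.ofReal T ^ (1 / 2 : ℝ))) *
        ENNReal.ofReal (Real.exp (ε * (θ ^ 2 * T / 2))) := by gcongr
    _ = _ := by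
        rw [ENNReal.ofReal_mul (by positivity), ENNReal.ofReal_add (by positivity) (by positivity),
          mul_assoc |θ|, ENNReal.ofReal_mul (abs_nonneg θ),
          ENNReal.ofReal_mul ENNReal.toReal_nonneg,
          ENNReal.ofReal_toReal (chainingConst_ne_top hp₂ hp), Real.enorm_eq_ofReal_abs,
          ENNReal.ofReal_rpow_of_pos hT, ← Real.sqrt_eq_rpow, mul_assoc ε, mul_div_right_comm]

lemma tendsto_exp_mul_linear_add_sqrt_mul_exp (a b : ℝ) {ε : ℝ} (hεγ : ε < γ) :
    Tendsto (fun T ↦ Real.exp (-γ * T) * ((a * T + b * √T) * Real.exp (ε * T))) atTop (𝓝 0) := by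
  have tendsto_pow (s : ℝ) := tendsto_rpow_mul_exp_neg_mul_atTop_nhds_zero s _ (sub_pos.2 hεγ)
  have := ((tendsto_pow 1).const_mul a).add ((tendsto_pow (1 / 2)).const_mul b)
  rw [mul_zero, mul_zero, add_zero] at this
  refine this.congr fun T ↦ ?_
  have exp_sub_split : Real.exp (-(γ - ε) * T) = Real.exp (-γ * T) * Real.exp (ε * T) := by
    rw [← Real.exp_add]
    ring_nf
  rw [exp_sub_split, Real.rpow_one, ← Real.sqrt_eq_rpow]
  ring

end BrownianIncrements

theorem stmt_17_general {Ω : Type*} [MeasurableSpace Ω] {P : Measure Ω} {B : ℝ → Ω → ℝ}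
    (hB : HasBrownianIncrements B P) (θ : ℝ) {γ : ℝ} (hγ : 0 < γ) :
    Tendsto (fun T ↦ Real.exp (-γ * T) *
        ∫ ω, (sSup ((fun s ↦ θ ^ 2 * s / 2 + θ * B s ω) '' Set.Icc 0 T)) *
          Real.exp (-θ ^ 2 * T / 2 - θ * B T ω) ∂P)
      atTop (𝓝 0) := by
  have hε : 0 < γ / (1 + θ ^ 2) := by positivity
  have growth_lt : γ / (1 + θ ^ 2) * (θ ^ 2 / 2) < γ := by
    rw [div_mul_eq_mul_div, div_lt_iff₀ (by positivity)]
    nlinarith [sq_nonneg θ]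
  obtain ⟨C, hC⟩ := hB.exists_abs_integral_sSup_mul_exp_le θ hε
  refine squeeze_zero_norm' ?_
    (tendsto_exp_mul_linear_add_sqrt_mul_exp (θ ^ 2 / 2) C growth_lt)
  filter_upwards [eventually_gt_atTop 0] with T hT
  rw [norm_mul, Real.norm_eq_abs, Real.abs_exp, Real.norm_eq_abs]
  gcongr
  exact hC T hT

theorem stmt_17 {Ω : Type*} [MeasurableSpace Ω] (P : Measure Ω) [IsProbabilityMeasure P]
    (B : ℝ → Ω → ℝ) (hB : IsStandardBM P B)
    (θ γ : ℝ) (hθ : 0 < θ) (hγ : 0 < γ) :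
    Tendsto (fun T => Real.exp (-γ * T) *
        ∫ ω, (sSup ((fun s => θ ^ 2 * s / 2 + θ * B s ω) '' Set.Icc 0 T)) *
          Real.exp (-θ ^ 2 * T / 2 - θ * B T ω) ∂P)
      atTop (nhds 0) :=
  stmt_17_general hB.hasBrownianIncrements θ hγ
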